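/- Let A and B be RLTs whose roots a and b are both Object nodes, with children subtrees indexed by edge-label sets κ(a) and κ(b), where A_k denotes the child subtree of A under edge label k and B_k that of B. Then the edit distance satisfies d(A, B) = Σ_{k ∈ κ(a) ∩ κ(b)} d(A_k, B_k) + Σ_{k ∈ κ(a) \ κ(b)} d(A_k, Λ) + Σ_{k ∈ κ(b) \ κ(a)} d(Λ, B_k). -/

import Mathlib

/- Formalization framework for "Tree edit distance for hierarchical data
compatible with HMIL paradigm".

Rooted labeled trees (RLTs): `Value` leaves carry a label `l : L` with data type
`τ l : DT`; `Bag` nodes have an unordered finite collection of children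
(represented by a `List` together with free, zero-cost permutation edit steps,
which realizes the multiset semantics); `Object` nodes have children indexed by
pairwise distinct string edge-labels (an association list with `Nodup` keys,
again with free reordering since it represents a finite map).  The empty tree Λ
is represented by `none : OTree L`. -/

namespace TED

inductive PreRLT (L : Type) : Type where
  | value : L → PreRLT L
  | bag   : List (PreRLT L) → PreRLT L
  | obj   : List (String × PreRLT L) → PreRLT L

namespace PreRLT

variable {L DT : Type}

/-- Node types ν: Value, Bag, Object. -/
inductive NT : Type where
  | value | bag | obj
deriving DecidableEq

/-- The kind of a node: its node type together with its label (Bag and Object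
nodes implicitly carry the null label). -/
inductive NodeKind (L : Type) : Type where
  | value : L → NodeKind L
  | bag : NodeKind L
  | obj : NodeKind L

def nt : PreRLT L → NT
  | .value _ => .value
  | .bag _ => .bag
  | .obj _ => .obj

def kind : PreRLT L → NodeKind L
  | .value l => .value l
  | .bag _ => .bag
  | .obj _ => .obj

def children : PreRLT L → List (PreRLT L)
  | .value _ => []
  | .bag cs => cs
  | .obj cs => cs.map Prod.snd

/-- A leaf is a node with no children (a Value node, an empty Bag or an empty
Object). -/
def IsLeaf (t : PreRLT L) : Prop := t.children = []

/-- Well-formedness: the edge labels of every Object node are pairwise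
distinct. -/
inductive WF : PreRLT L → Prop where
  | value (l : L) : WF (.value l)
  | bag {cs : List (PreRLT L)} : (∀ c ∈ cs, WF c) → WF (.bag cs)
  | obj {cs : List (String × PreRLT L)} :
      (cs.map Prod.fst).Nodup → (∀ p ∈ cs, WF p.2) → WF (.obj cs)

end PreRLT

open PreRLT

/-- Possibly empty rooted labeled tree; `none` is the empty tree Λ. -/
abbrev OTree (L : Type) := Option (PreRLT L)

def WFO {L : Type} : OTree L → Prop
  | none => True
  | some t => t.WF

/-- The cost function γ.  `rel l l'` is the cost of relabeling a Value node
(used only when `τ l = τ l'`), and `del k` is the cost γ(v, λ) of deleting a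
node of kind `k`; insertion cost γ(λ, v) equals the deletion cost γ(v, λ).
γ is a metric on labels of equal data type. -/
structure Cost (L DT : Type) (τ : L → DT) where
  rel : L → L → ℝ
  del : PreRLT.NodeKind L → ℝ
  del_nonneg : ∀ k, 0 ≤ del k
  rel_self : ∀ l, rel l l = 0
  rel_indisc : ∀ l l', τ l = τ l' → rel l l' = 0 → l = l'
  rel_symm : ∀ l l', rel l l' = rel l' l
  rel_triangle : ∀ l₁ l₂ l₃, τ l₁ = τ l₂ → τ l₂ = τ l₃ →
      rel l₁ l₃ ≤ rel l₁ l₂ + rel l₂ l₃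

variable {L DT : Type} {τ : L → DT}

/-- Schema-preserving edit steps on nonempty trees: relabel a Value node to a
label of the same data type, delete a leaf, insert a leaf (at an Object node
only with a fresh edge label).  The `bagPerm`/`objPerm` steps are invisible,
zero-cost reorderings of the list representation of the unordered children
collections. -/
inductive Estep (τ : L → DT) : PreRLT L → PreRLT L → Type where
  | relabel (l l' : L) (h : τ l = τ l') : Estep τ (.value l) (.value l')
  | bagPerm (cs : List (PreRLT L)) (σ : Equiv.Perm (Fin cs.length)) :
      Estep τ (.bag cs) (.bag (List.ofFn fun i => cs.get (σ i)))
  | objPerm (cs : List (String × PreRLT L)) (σ : Equiv.Perm (Fin cs.length)) :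
      Estep τ (.obj cs) (.obj (List.ofFn fun i => cs.get (σ i)))
  | bagCongr (pre post : List (PreRLT L)) {t t' : PreRLT L} (e : Estep τ t t') :
      Estep τ (.bag (pre ++ t :: post)) (.bag (pre ++ t' :: post))
  | objCongr (pre post : List (String × PreRLT L)) (k : String) {t t' : PreRLT L}
      (e : Estep τ t t') :
      Estep τ (.obj (pre ++ (k, t) :: post)) (.obj (pre ++ (k, t') :: post))
  | bagDel (cs : List (PreRLT L)) (t : PreRLT L) (h : t.IsLeaf) :
      Estep τ (.bag (t :: cs)) (.bag cs)
  | bagIns (cs : List (PreRLT L)) (t : PreRLT L) (h : t.IsLeaf) :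
      Estep τ (.bag cs) (.bag (t :: cs))
  | objDel (cs : List (String × PreRLT L)) (k : String) (t : PreRLT L) (h : t.IsLeaf) :
      Estep τ (.obj ((k, t) :: cs)) (.obj cs)
  | objIns (cs : List (String × PreRLT L)) (k : String) (t : PreRLT L) (h : t.IsLeaf)
      (hk : k ∉ cs.map Prod.fst) :
      Estep τ (.obj cs) (.obj ((k, t) :: cs))

/-- Cost of a single edit step. -/
def Estep.cost (C : Cost L DT τ) : {t t' : PreRLT L} → Estep τ t t' → ℝ
  | _, _, .relabel l l' _ => C.rel l l'
  | _, _, .bagPerm _ _ => 0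
  | _, _, .objPerm _ _ => 0
  | _, _, .bagCongr _ _ e => e.cost C
  | _, _, .objCongr _ _ _ e => e.cost C
  | _, _, .bagDel _ t _ => C.del t.kind
  | _, _, .bagIns _ t _ => C.del t.kind
  | _, _, .objDel _ _ t _ => C.del t.kind
  | _, _, .objIns _ _ t _ _ => C.del t.kind

/-- Edit steps on possibly empty trees: the root leaf may be deleted, and a
root leaf may be inserted into the empty tree. -/
inductive EstepO (τ : L → DT) : OTree L → OTree L → Type where
  | inner {t t' : PreRLT L} (e : Estep τ t t') : EstepO τ (some t) (some t')
  | delRoot (t : PreRLT L) (h : t.IsLeaf) : EstepO τ (some t) none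
  | insRoot (t : PreRLT L) (h : t.IsLeaf) : EstepO τ none (some t)

def EstepO.cost (C : Cost L DT τ) : {T T' : OTree L} → EstepO τ T T' → ℝ
  | _, _, .inner e => e.cost C
  | _, _, .delRoot t _ => C.del t.kind
  | _, _, .insRoot t _ => C.del t.kind

/-- An edit sequence S = s₁ ∘ ⋯ ∘ s_k transforming one tree into another. -/
inductive Eseq (τ : L → DT) : OTree L → OTree L → Type where
  | nil (T : OTree L) : Eseq τ T T
  | cons {T T' T'' : OTree L} (s : EstepO τ T T') (S : Eseq τ T' T'') : Eseq τ T T''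

/-- γ(S), the total cost of an edit sequence. -/
def Eseq.cost (C : Cost L DT τ) : {T T' : OTree L} → Eseq τ T T' → ℝ
  | _, _, .nil _ => 0
  | _, _, .cons s S => s.cost C + S.cost C

/-- The tree edit distance d(T, T'): the minimum of γ(S) over all edit
sequences S transforming T into T'. -/
noncomputable def editDist (C : Cost L DT τ) (T T' : OTree L) : ℝ :=
  sInf {c : ℝ | ∃ S : Eseq τ T T', S.cost C = c}

end TED
namespace TED

open PreRLT

variable {L DT : Type} {τ : L → DT}

/-- Addresses of nodes in a tree: a child of a Bag node is addressed by its
position, a child of an Object node by its edge label. -/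
inductive Pstep : Type where
  | idx : ℕ → Pstep
  | key : String → Pstep
deriving DecidableEq

abbrev Path := List Pstep

/-- The subtree rooted at the node addressed by a path, if it exists. -/
def subAt : Path → PreRLT L → Option (PreRLT L)
  | [], t => some t
  | .idx n :: p, .bag cs => cs[n]?.bind (subAt p)
  | .key k :: p, .obj cs => (List.lookup k cs).bind (subAt p)
  | _, _ => none

def subAtO (T : OTree L) (p : Path) : Option (PreRLT L) :=
  T.bind (fun t => subAt p t)

/-- `p` addresses a node of `T`. -/
def IsNode (T : OTree L) (p : Path) : Prop := (subAtO T p).isSome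

/-- Two nodes have the same node type and, for Value nodes, the same data
type. -/
def SameTypePair (τ : L → DT) (t₁ t₂ : PreRLT L) : Prop :=
  t₁.nt = t₂.nt ∧ ∀ l₁ l₂, t₁ = .value l₁ → t₂ = .value l₂ → τ l₁ = τ l₂

/-- `q` addresses a (proper) descendant of the node addressed by `p`. -/
def IsDesc (p q : Path) : Prop := p <+: q ∧ q ≠ p

/-- An edit distance mapping (M, T₁, T₂). -/
structure IsMapping (τ : L → DT) (T₁ T₂ : OTree L) (M : Set (Path × Path)) : Prop where
  /-- pairs consist of a node of T₁ and a node of T₂ -/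
  nodes : ∀ pq ∈ M, IsNode T₁ pq.1 ∧ IsNode T₂ pq.2
  /-- paired nodes have the same node type and, for Value nodes, data type -/
  types : ∀ pq ∈ M, ∃ t₁ t₂, subAtO T₁ pq.1 = some t₁ ∧ subAtO T₂ pq.2 = some t₂ ∧
      SameTypePair τ t₁ t₂
  /-- the mapping is one-to-one -/
  one_to_one : ∀ pq ∈ M, ∀ pq' ∈ M, ((pq : Path × Path).1 = (pq' : Path × Path).1 ↔
      (pq : Path × Path).2 = (pq' : Path × Path).2)
  /-- parents of non-root paired nodes are paired as well -/
  parents : ∀ pq ∈ M, (pq : Path × Path).1 ≠ [] → (pq : Path × Path).2 ≠ [] →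
      ((pq : Path × Path).1.dropLast, (pq : Path × Path).2.dropLast) ∈ M
  /-- if (v, w) ∉ M then no descendant of v is paired with a descendant of w -/
  desc : ∀ p q, (p, q) ∉ M → ∀ p' q', IsDesc p p' → IsDesc q q' → (p', q') ∉ M
  /-- paired children of Object nodes are connected by equally labeled edges -/
  edge : ∀ pq ∈ M, ∀ t : PreRLT L, (pq : Path × Path).1 ≠ [] →
      subAtO T₁ (pq : Path × Path).1.dropLast = some t → t.nt = .obj →
      (pq : Path × Path).1.getLast? = (pq : Path × Path).2.getLast?

/-- γ(v → w) for a pair of mapped nodes: the relabeling cost for Value nodes,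
and 0 for the (null-labeled) inner nodes. -/
noncomputable def pairCost (C : Cost L DT τ) (T₁ T₂ : OTree L) (p q : Path) : ℝ :=
  match subAtO T₁ p, subAtO T₂ q with
  | some (.value l₁), some (.value l₂) => C.rel l₁ l₂
  | _, _ => 0

/-- γ(v, λ), the deletion (= insertion) cost of the node of `T` at `p`. -/
noncomputable def delCost (C : Cost L DT τ) (T : OTree L) (p : Path) : ℝ :=
  match subAtO T p with
  | some t => C.del t.kind
  | none => 0

/-- γ(M) = Σ_{(v,w)∈M} γ(v,w) + Σ_{v∈N₁} γ(v,λ) + Σ_{w∈N₂} γ(λ,w), where N₁, N₂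
are the nodes of T₁, T₂ not occurring in M. -/
noncomputable def mapCost (C : Cost L DT τ) (T₁ T₂ : OTree L)
    (M : Set (Path × Path)) : ℝ :=
  (∑ᶠ pq ∈ M, pairCost C T₁ T₂ (pq : Path × Path).1 (pq : Path × Path).2)
    + (∑ᶠ p ∈ {p : Path | IsNode T₁ p ∧ ∀ q, (p, q) ∉ M}, delCost C T₁ p)
    + (∑ᶠ q ∈ {q : Path | IsNode T₂ q ∧ ∀ p, (p, q) ∉ M}, delCost C T₂ q)

/-- How a single edit step moves node addresses: `e.pmap p = some q` iff the
node at `p` persists through `e` (possibly relabeled) as the node at `q`. -/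
def Estep.pmap : {t t' : PreRLT L} → Estep τ t t' → Path → Option Path
  | _, _, .relabel _ _ _, [] => some []
  | _, _, .relabel _ _ _, _ :: _ => none
  | _, _, .bagPerm _ _, [] => some []
  | _, _, .bagPerm cs σ, .idx i :: p =>
      if h : i < cs.length then some (.idx (σ.symm ⟨i, h⟩).val :: p) else none
  | _, _, .bagPerm _ _, .key _ :: _ => none
  | _, _, .objPerm _ _, [] => some []
  | _, _, .objPerm _ _, .key k :: p => some (.key k :: p)
  | _, _, .objPerm _ _, .idx _ :: _ => none
  | _, _, .bagCongr _ _ _, [] => some []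
  | _, _, .bagCongr pre _ e, .idx i :: p =>
      if i = pre.length then (e.pmap p).map (fun q => .idx i :: q)
      else some (.idx i :: p)
  | _, _, .bagCongr _ _ _, .key _ :: _ => none
  | _, _, .objCongr _ _ _ _, [] => some []
  | _, _, .objCongr _ _ k e, .key k' :: p =>
      if k' = k then (e.pmap p).map (fun q => .key k :: q)
      else some (.key k' :: p)
  | _, _, .objCongr _ _ _ _, .idx _ :: _ => none
  | _, _, .bagDel _ _ _, [] => some []
  | _, _, .bagDel _ _ _, .idx 0 :: _ => none
  | _, _, .bagDel _ _ _, .idx (i + 1) :: p => some (.idx i :: p)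
  | _, _, .bagDel _ _ _, .key _ :: _ => none
  | _, _, .bagIns _ _ _, [] => some []
  | _, _, .bagIns _ _ _, .idx i :: p => some (.idx (i + 1) :: p)
  | _, _, .bagIns _ _ _, .key _ :: _ => none
  | _, _, .objDel _ k _ _, [] => some []
  | _, _, .objDel _ k _ _, .key k' :: p =>
      if k' = k then none else some (.key k' :: p)
  | _, _, .objDel _ _ _ _, .idx _ :: _ => none
  | _, _, .objIns _ k _ _ _, [] => some []
  | _, _, .objIns _ k _ _ _, .key k' :: p =>
      if k' = k then none else some (.key k' :: p)
  | _, _, .objIns _ _ _ _ _, .idx _ :: _ => none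

def EstepO.pmap : {T T' : OTree L} → EstepO τ T T' → Path → Option Path
  | _, _, .inner e => e.pmap
  | _, _, .delRoot _ _ => fun _ => none
  | _, _, .insRoot _ _ => fun _ => none

/-- How an edit sequence moves node addresses, by composition. -/
def Eseq.pmap : {T T' : OTree L} → Eseq τ T T' → Path → Option Path
  | _, _, .nil _ => fun p => some p
  | _, _, .cons s S => fun p => (s.pmap p).bind S.pmap

/-- The mapping (M, T₁, T₂) induced by an edit sequence S : T₁ → T₂, pairing
each node of T₁ that persists (possibly relabeled) through S with its image in
T₂. -/
def Eseq.induced {T₁ T₂ : OTree L} (S : Eseq τ T₁ T₂) : Set (Path × Path) :=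
  {pq | IsNode T₁ pq.1 ∧ S.pmap pq.1 = some pq.2}

/-- The sum Σ_v γ(v, λ) of the deletion (equivalently, insertion) costs over
all nodes of a tree. -/
noncomputable def delSum (C : Cost L DT τ) : PreRLT L → ℝ
  | .value l => C.del (.value l)
  | .bag cs => C.del .bag + (cs.attach.map (fun c => delSum C c.1)).sum
  | .obj cs => C.del .obj + (cs.attach.map (fun c => delSum C c.1.2)).sum
  termination_by t => sizeOf t
  decreasing_by
  · have := List.sizeOf_lt_of_mem c.2
    simp only [PreRLT.bag.sizeOf_spec]
    omega
  · have h1 := List.sizeOf_lt_of_mem c.2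
    have h2 : sizeOf c.1.2 < sizeOf c.1 := by
      obtain ⟨a, b⟩ := c.1
      simp [Prod.mk.sizeOf_spec]
    simp only [PreRLT.obj.sizeOf_spec]
    omega

/-- Equality of trees under the multiset semantics of Bag children and the
finite-map semantics of Object children. -/
inductive TEquiv : PreRLT L → PreRLT L → Prop where
  | value (l : L) : TEquiv (.value l) (.value l)
  | bag {cs cs' : List (PreRLT L)} (l : List (PreRLT L × PreRLT L))
      (h₁ : l.map Prod.fst = cs) (h₂ : (l.map Prod.snd).Perm cs')
      (h₃ : ∀ pq ∈ l, TEquiv pq.1 pq.2) :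
      TEquiv (.bag cs) (.bag cs')
  | obj {cs cs' : List (String × PreRLT L)}
      (l : List ((String × PreRLT L) × (String × PreRLT L)))
      (h₁ : l.map Prod.fst = cs) (h₂ : (l.map Prod.snd).Perm cs')
      (hk : ∀ pq ∈ l, pq.1.1 = pq.2.1)
      (h₃ : ∀ pq ∈ l, TEquiv pq.1.2 pq.2.2) :
      TEquiv (.obj cs) (.obj cs')

/-- Equality of possibly empty trees under the multiset semantics. -/
def OEquiv : OTree L → OTree L → Prop
  | none, none => True
  | some t, some t' => TEquiv t t'
  | _, _ => False

end TED

/-! The child of an Object root under an edge label `k` evolves on its own during an edit sequence: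
every single step edits at most one of these children, by a step of the same cost. Restricting an
edit sequence `A → B` to each label therefore yields edit sequences `A_k → B_k` (with `Λ` for a
missing child) of no larger total cost. Conversely, edit sequences `A_k → B_k` can be run one label
after another below the root of `A`. Hence `d(A, B) = ∑ k, d(A_k, B_k)` over any finite set of
labels containing `κ(a) ∪ κ(b)`. -/

namespace TED

section AssocList

variable {α β : Type*}

theorem ofFn_get_perm (l : List α) (σ : Equiv.Perm (Fin l.length)) :
    (List.ofFn fun i ↦ l.get (σ i)).Perm l := by
  simpa only [Function.comp_def, List.ofFn_get] using σ.ofFn_comp_perm l.get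

theorem exists_eq_ofFn_get_of_perm {l l' : List α} (h : l.Perm l') :
    ∃ σ : Equiv.Perm (Fin l.length), l' = List.ofFn fun i ↦ l.get (σ i) := by
  classical
  let e : Fin l'.length ≃ Fin l.length :=
    ⟨h.symm.idxBij, h.idxBij, h.idxBij_leftInverse_idxBij_symm, h.idxBij_rightInverse_idxBij_symm⟩
  refine ⟨(finCongr h.length_eq).trans e, List.ext_get (by simp [h.length_eq]) fun i hi _ ↦ ?_⟩
  rw [List.get_ofFn]
  exact (h.symm.getElem_idxBij_eq_getElem ⟨i, hi⟩).symm

variable [BEq α] [LawfulBEq α]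

theorem lookup_eq_none_of_notMem_keys {l : List (α × β)} {k : α} (h : k ∉ l.map Prod.fst) :
    l.lookup k = none := by
  rw [List.lookup_eq_none_iff]
  intro p hp
  exact bne_iff_ne.2 fun hk ↦ h (hk ▸ List.mem_map_of_mem hp)

theorem lookup_cons_of_ne {l : List (α × β)} {k k' : α} (b : β) (h : k' ≠ k) :
    ((k, b) :: l).lookup k' = l.lookup k' := by
  simp [List.lookup_cons, beq_false_of_ne h]

theorem mem_of_lookup_eq_some {l : List (α × β)} {k : α} {b : β} (h : l.lookup k = some b) :
    (k, b) ∈ l := by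
  obtain ⟨l₁, l₂, rfl, -⟩ := List.lookup_eq_some_iff.1 h
  simp

theorem lookup_induction {motive : Option β → Prop} {l : List (α × β)} (hnone : motive none)
    (hsome : ∀ p ∈ l, motive (some p.2)) (k : α) : motive (l.lookup k) := by
  cases h : l.lookup k with
  | none => exact hnone
  | some b => exact hsome (k, b) (mem_of_lookup_eq_some h)

theorem lookup_eq_some_iff_mem {l : List (α × β)} (hl : (l.map Prod.fst).Nodup) {k : α} {b : β} :
    l.lookup k = some b ↔ (k, b) ∈ l := by
  refine ⟨mem_of_lookup_eq_some, fun hmem ↦ ?_⟩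
  obtain ⟨l₁, l₂, rfl⟩ := List.append_of_mem hmem
  have hk : k ∉ l₁.map Prod.fst := by
    rw [List.map_append, List.nodup_append] at hl
    exact fun hk ↦ hl.2.2 k hk k (by simp) rfl
  simp [List.lookup_append, lookup_eq_none_of_notMem_keys hk]

theorem lookup_eq_of_perm {l l' : List (α × β)} (hl : (l.map Prod.fst).Nodup) (h : l.Perm l')
    (k : α) : l.lookup k = l'.lookup k := by
  ext b
  rw [lookup_eq_some_iff_mem hl, lookup_eq_some_iff_mem ((h.map Prod.fst).nodup hl), h.mem_iff]

theorem perm_of_lookup_eq {l l' : List (α × β)} (hl : (l.map Prod.fst).Nodup)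
    (hl' : (l'.map Prod.fst).Nodup) (h : ∀ k, l.lookup k = l'.lookup k) : l.Perm l' := by
  rw [List.perm_ext_iff_of_nodup (.of_map _ hl) (.of_map _ hl')]
  rintro ⟨k, b⟩
  rw [← lookup_eq_some_iff_mem hl, ← lookup_eq_some_iff_mem hl', h]

/-- The analogue of `Function.update` for association lists: the value at the key `k` becomes `o`,
where `none` means that the key is removed. The new entry, if any, is put at the head. -/
def setKey (k : α) (o : Option β) (l : List (α × β)) : List (α × β) :=
  (o.map (Prod.mk k)).toList ++ l.filter (·.1 != k)

theorem notMem_keys_filter_bne (k : α) (l : List (α × β)) :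
    k ∉ (l.filter (·.1 != k)).map Prod.fst := by
  simp

theorem lookup_setKey_self (k : α) (o : Option β) (l : List (α × β)) :
    (setKey k o l).lookup k = o := by
  cases o <;> simp [setKey, lookup_eq_none_of_notMem_keys]

theorem lookup_setKey_of_ne {k k' : α} (h : k' ≠ k) (o : Option β) (l : List (α × β)) :
    (setKey k o l).lookup k' = l.lookup k' := by
  have hfilter : (l.filter (·.1 != k)).lookup k' = l.lookup k' := by
    induction l with
    | nil => rfl
    | cons p l ih =>
      by_cases hp : p.1 = k
      · rw [List.filter_cons_of_neg (by simpa using hp), ih, lookup_cons_of_ne _ (hp ▸ h)]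
      · rw [List.filter_cons_of_pos (by simpa using hp), List.lookup_cons, List.lookup_cons, ih]
  cases o <;> simp [setKey, hfilter, List.lookup_cons, beq_false_of_ne h]

theorem nodup_keys_setKey {l : List (α × β)} (hl : (l.map Prod.fst).Nodup) (k : α)
    (o : Option β) : ((setKey k o l).map Prod.fst).Nodup := by
  have hfilter : ((l.filter (·.1 != k)).map Prod.fst).Nodup :=
    (List.filter_sublist.map Prod.fst).nodup hl
  cases o with
  | none => exact hfilter
  | some b => exact hfilter.cons (notMem_keys_filter_bne k l)

theorem setKey_lookup_perm {l : List (α × β)} (hl : (l.map Prod.fst).Nodup) (k : α) :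
    (setKey k (l.lookup k) l).Perm l := by
  refine perm_of_lookup_eq (nodup_keys_setKey hl k _) hl fun k' ↦ ?_
  obtain rfl | h := eq_or_ne k' k
  · exact lookup_setKey_self k' _ l
  · exact lookup_setKey_of_ne h _ l

end AssocList

open PreRLT

variable {L DT : Type} {τ : L → DT} {C : Cost L DT τ}

theorem Cost.rel_nonneg (C : Cost L DT τ) {l l' : L} (h : τ l = τ l') : 0 ≤ C.rel l l' := by
  have htriangle := C.rel_triangle l l' l h h.symm
  rw [C.rel_self, C.rel_symm l' l] at htriangle
  linarith

theorem Estep.cost_nonneg (C : Cost L DT τ) {t t' : PreRLT L} (e : Estep τ t t') :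
    0 ≤ e.cost C := by
  induction e with
  | relabel l l' h => exact C.rel_nonneg h
  | bagPerm | objPerm => exact le_rfl
  | bagCongr _ _ _ ih => exact ih
  | objCongr _ _ _ _ ih => exact ih
  | bagDel | bagIns | objDel | objIns => exact C.del_nonneg _

theorem EstepO.cost_nonneg (C : Cost L DT τ) {T T' : OTree L} (s : EstepO τ T T') :
    0 ≤ s.cost C := by
  cases s with
  | inner e => exact e.cost_nonneg C
  | delRoot | insRoot => exact C.del_nonneg _

theorem Eseq.cost_nonneg (C : Cost L DT τ) {T T' : OTree L} (S : Eseq τ T T') :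
    0 ≤ S.cost C := by
  induction S with
  | nil => exact le_rfl
  | cons s S ih => exact add_nonneg (s.cost_nonneg C) ih

/-- `c` is the cost `γ(S)` of some edit sequence `S` from `T` to `T'`, so that `editDist C T T'` is
the infimum of `{c | IsEditCost C T T' c}`. -/
def IsEditCost (C : Cost L DT τ) (T T' : OTree L) (c : ℝ) : Prop :=
  ∃ S : Eseq τ T T', S.cost C = c

namespace IsEditCost

variable {T T' T'' : OTree L} {c c' : ℝ}

theorem nonneg (h : IsEditCost C T T' c) : 0 ≤ c := by
  obtain ⟨S, rfl⟩ := h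
  exact S.cost_nonneg C

theorem refl (C : Cost L DT τ) (T : OTree L) : IsEditCost C T T 0 :=
  ⟨.nil T, rfl⟩

theorem cons (s : EstepO τ T T') (h : IsEditCost C T' T'' c) :
    IsEditCost C T T'' (s.cost C + c) := by
  obtain ⟨S, rfl⟩ := h
  exact ⟨.cons s S, rfl⟩

theorem of_step (C : Cost L DT τ) (s : EstepO τ T T') : IsEditCost C T T' (s.cost C) := by
  simpa using cons s (refl C T')

theorem trans (h : IsEditCost C T T' c) (h' : IsEditCost C T' T'' c') :
    IsEditCost C T T'' (c + c') := by
  obtain ⟨S, rfl⟩ := h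
  induction S with
  | nil => simpa [Eseq.cost] using h'
  | cons s S ih => simpa only [Eseq.cost, add_assoc] using cons s (ih h')

theorem bag_append (h : IsEditCost C T T' c) (cs : List (PreRLT L)) :
    IsEditCost C (some (.bag (T.toList ++ cs))) (some (.bag (T'.toList ++ cs))) c := by
  obtain ⟨S, rfl⟩ := h
  induction S with
  | nil => exact refl C _
  | cons s S ih =>
    cases s with
    | inner e => exact cons (.inner (.bagCongr [] cs e)) ih
    | delRoot t ht => exact cons (.inner (.bagDel cs t ht)) ih
    | insRoot t ht => exact cons (.inner (.bagIns cs t ht)) ih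

theorem obj_setKey (h : IsEditCost C T T' c) (k : String) (cs : List (String × PreRLT L)) :
    IsEditCost C (some (.obj (setKey k T cs))) (some (.obj (setKey k T' cs))) c := by
  obtain ⟨S, rfl⟩ := h
  induction S with
  | nil => exact refl C _
  | cons s S ih =>
    cases s with
    | inner e => exact cons (.inner (.objCongr [] _ k e)) ih
    | delRoot t ht => exact cons (.inner (.objDel _ k t ht)) ih
    | insRoot t ht => exact cons (.inner (.objIns _ k t ht (notMem_keys_filter_bne k cs))) ih

theorem obj_of_perm (C : Cost L DT τ) {cs cs' : List (String × PreRLT L)} (h : cs.Perm cs') :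
    IsEditCost C (some (.obj cs)) (some (.obj cs')) 0 := by
  obtain ⟨σ, rfl⟩ := exists_eq_ofFn_get_of_perm h
  exact of_step C (.inner (.objPerm cs σ))

theorem obj_of_lookup {as bs : List (String × PreRLT L)} (has : (as.map Prod.fst).Nodup)
    (hbs : (bs.map Prod.fst).Nodup) {K : Finset String}
    (hK : ∀ k ∉ K, as.lookup k = bs.lookup k) {c : String → ℝ}
    (h : ∀ k ∈ K, IsEditCost C (as.lookup k) (bs.lookup k) (c k)) :
    IsEditCost C (some (.obj as)) (some (.obj bs)) (∑ k ∈ K, c k) := by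
  induction K using Finset.induction_on generalizing as with
  | empty => exact obj_of_perm C (perm_of_lookup_eq has hbs fun k ↦ hK k (Finset.notMem_empty k))
  | insert k K hkK ih =>
    have hfront := obj_of_perm C (setKey_lookup_perm has k).symm
    have hedit := (h k (Finset.mem_insert_self k K)).obj_setKey k as
    have hrest : IsEditCost C (some (.obj (setKey k (bs.lookup k) as))) (some (.obj bs))
        (∑ k ∈ K, c k) := by
      refine ih (nodup_keys_setKey has k _) (fun k' hk' ↦ ?_) fun k' hk' ↦ ?_
      · obtain rfl | hne := eq_or_ne k' k
        · exact lookup_setKey_self k' _ as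
        · rw [lookup_setKey_of_ne hne, hK k' (by simp [hne, hk'])]
      · rw [lookup_setKey_of_ne (ne_of_mem_of_not_mem hk' hkK)]
        exact h k' (Finset.mem_insert_of_mem hk')
    simpa [Finset.sum_insert hkK] using hfront.trans (hedit.trans hrest)

end IsEditCost

section Distance

variable {T T' : OTree L} {c : ℝ}

theorem bddBelow_setOf_isEditCost (C : Cost L DT τ) (T T' : OTree L) :
    BddBelow {c | IsEditCost C T T' c} :=
  ⟨0, fun _ ↦ IsEditCost.nonneg⟩

theorem editDist_le (h : IsEditCost C T T' c) : editDist C T T' ≤ c :=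
  csInf_le (bddBelow_setOf_isEditCost C T T') h

theorem le_editDist {b : ℝ} (hne : ∃ c, IsEditCost C T T' c)
    (h : ∀ c, IsEditCost C T T' c → b ≤ c) : b ≤ editDist C T T' :=
  le_csInf hne h

theorem exists_seq_isEditCost_tendsto (h : ∃ c, IsEditCost C T T' c) :
    ∃ c : ℕ → ℝ, (∀ n, IsEditCost C T T' (c n)) ∧
      Filter.Tendsto c Filter.atTop (nhds (editDist C T T')) := by
  obtain ⟨c, -, hlim, hc⟩ := exists_seq_tendsto_sInf h (bddBelow_setOf_isEditCost C T T')
  exact ⟨c, hc, hlim⟩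

end Distance

theorem PreRLT.WF.nodup_keys {cs : List (String × PreRLT L)} (h : (PreRLT.obj cs).WF) :
    (cs.map Prod.fst).Nodup := by
  cases h with | obj hnodup _ => exact hnodup

theorem PreRLT.WF.lookup {cs : List (String × PreRLT L)} (h : (PreRLT.obj cs).WF) (k : String) :
    WFO (cs.lookup k) := by
  cases h with
  | obj _ hwf => exact lookup_induction (motive := WFO) trivial hwf k

section Reachability

theorem exists_isEditCost_obj_obj {as bs : List (String × PreRLT L)}
    (has : (as.map Prod.fst).Nodup) (hbs : (bs.map Prod.fst).Nodup)
    (h : ∀ k, ∃ c, IsEditCost C (as.lookup k) (bs.lookup k) c) :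
    ∃ c, IsEditCost C (some (.obj as)) (some (.obj bs)) c := by
  choose c hc using h
  refine ⟨_, .obj_of_lookup (K := (as.map Prod.fst ++ bs.map Prod.fst).toFinset) has hbs
    (fun k hk ↦ ?_) fun k _ ↦ hc k⟩
  rw [List.mem_toFinset, List.mem_append, not_or] at hk
  rw [lookup_eq_none_of_notMem_keys hk.1, lookup_eq_none_of_notMem_keys hk.2]

theorem exists_isEditCost_bag_empty {cs : List (PreRLT L)}
    (h : ∀ t ∈ cs, ∃ c, IsEditCost C (some t) none c) :
    ∃ c, IsEditCost C (some (.bag cs)) (some (.bag [])) c := by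
  induction cs with
  | nil => exact ⟨0, .refl C _⟩
  | cons t cs ih =>
    obtain ⟨⟨c, hc⟩, hcs⟩ := List.forall_mem_cons.1 h
    obtain ⟨c', hc'⟩ := ih hcs
    exact ⟨c + c', (hc.bag_append cs).trans hc'⟩

theorem exists_isEditCost_empty_bag {cs : List (PreRLT L)}
    (h : ∀ t ∈ cs, ∃ c, IsEditCost C none (some t) c) :
    ∃ c, IsEditCost C (some (.bag [])) (some (.bag cs)) c := by
  induction cs with
  | nil => exact ⟨0, .refl C _⟩
  | cons t cs ih =>
    obtain ⟨⟨c, hc⟩, hcs⟩ := List.forall_mem_cons.1 h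
    obtain ⟨c', hc'⟩ := ih hcs
    exact ⟨c' + c, hc'.trans (hc.bag_append cs)⟩

theorem exists_isEditCost_obj_empty {cs : List (String × PreRLT L)}
    (hcs : (cs.map Prod.fst).Nodup) (h : ∀ p ∈ cs, ∃ c, IsEditCost C (some p.2) none c) :
    ∃ c, IsEditCost C (some (.obj cs)) (some (.obj [])) c :=
  exists_isEditCost_obj_obj hcs .nil <|
    lookup_induction (motive := fun T ↦ ∃ c, IsEditCost C T none c) ⟨0, .refl C none⟩ h

theorem exists_isEditCost_empty_obj {cs : List (String × PreRLT L)}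
    (hcs : (cs.map Prod.fst).Nodup) (h : ∀ p ∈ cs, ∃ c, IsEditCost C none (some p.2) c) :
    ∃ c, IsEditCost C (some (.obj [])) (some (.obj cs)) c :=
  exists_isEditCost_obj_obj .nil hcs <|
    lookup_induction (motive := fun T ↦ ∃ c, IsEditCost C none T c) ⟨0, .refl C none⟩ h

theorem PreRLT.WF.exists_isEditCost_none (C : Cost L DT τ) {t : PreRLT L} (h : t.WF) :
    ∃ c, IsEditCost C (some t) none c := by
  induction h with
  | value l => exact ⟨_, .of_step C (.delRoot (.value l) rfl)⟩
  | bag _ ih =>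
    obtain ⟨c, hc⟩ := exists_isEditCost_bag_empty ih
    exact ⟨_, hc.trans (.of_step C (.delRoot (.bag []) rfl))⟩
  | obj hnodup _ ih =>
    obtain ⟨c, hc⟩ := exists_isEditCost_obj_empty hnodup ih
    exact ⟨_, hc.trans (.of_step C (.delRoot (.obj []) rfl))⟩

theorem PreRLT.WF.exists_isEditCost_of_none (C : Cost L DT τ) {t : PreRLT L} (h : t.WF) :
    ∃ c, IsEditCost C none (some t) c := by
  induction h with
  | value l => exact ⟨_, .of_step C (.insRoot (.value l) rfl)⟩
  | bag _ ih =>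
    obtain ⟨c, hc⟩ := exists_isEditCost_empty_bag ih
    exact ⟨_, .trans (.of_step C (.insRoot (.bag []) rfl)) hc⟩
  | obj hnodup _ ih =>
    obtain ⟨c, hc⟩ := exists_isEditCost_empty_obj hnodup ih
    exact ⟨_, .trans (.of_step C (.insRoot (.obj []) rfl)) hc⟩

theorem exists_isEditCost (C : Cost L DT τ) {T T' : OTree L} (hT : WFO T) (hT' : WFO T') :
    ∃ c, IsEditCost C T T' c := by
  have hdel : ∃ c, IsEditCost C T none c := by
    cases T with
    | none => exact ⟨0, .refl C none⟩
    | some t => exact WF.exists_isEditCost_none C hT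
  have hins : ∃ c, IsEditCost C none T' c := by
    cases T' with
    | none => exact ⟨0, .refl C none⟩
    | some t => exact WF.exists_isEditCost_of_none C hT'
  obtain ⟨c, hc⟩ := hdel
  obtain ⟨c', hc'⟩ := hins
  exact ⟨c + c', hc.trans hc'⟩

end Reachability

section Restriction

/-- The child subtree `T_k` of an Object root under the edge label `k`. It is `Λ` if there is no
such child, in particular if the root of `T` is not an Object node: an edit sequence between Object
nodes may pass through such trees. -/
def child : OTree L → String → OTree L
  | some (.obj cs), k => cs.lookup k
  | _, _ => none

/-- The edge labels below an Object root are pairwise distinct. Unlike well-formedness this is a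
condition on the root only, which is all that restricting an edit sequence to the children of the
root requires of the trees along the sequence. -/
def HasNodupKeys : OTree L → Prop
  | some (.obj cs) => (cs.map Prod.fst).Nodup
  | _ => True

theorem child_of_isLeaf {t : PreRLT L} (h : t.IsLeaf) (k : String) : child (some t) k = none := by
  cases t with
  | obj cs =>
    obtain rfl : cs = [] := List.map_eq_nil_iff.1 h
    rfl
  | _ => rfl

theorem hasNodupKeys_of_isLeaf {t : PreRLT L} (h : t.IsLeaf) : HasNodupKeys (some t) := by
  cases t with
  | obj cs =>
    obtain rfl : cs = [] := List.map_eq_nil_iff.1 h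
    exact List.nodup_nil
  | _ => trivial

theorem EstepO.hasNodupKeys {T T' : OTree L} (s : EstepO τ T T') (h : HasNodupKeys T) :
    HasNodupKeys T' := by
  cases s with
  | delRoot => trivial
  | insRoot t ht => exact hasNodupKeys_of_isLeaf ht
  | inner e =>
    cases e with
    | relabel | bagPerm | bagCongr | bagDel | bagIns => trivial
    | objPerm cs σ => exact ((ofFn_get_perm cs σ).symm.map Prod.fst).nodup h
    | objCongr => simpa [HasNodupKeys] using h
    | objDel => exact (List.nodup_cons.1 h).2
    | objIns _ _ _ _ hk => exact List.nodup_cons.2 ⟨hk, h⟩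

/-- The children of `T` under the labels in `K` can be edited separately into those of `T'`, at a
total cost of at most `γ`. -/
def ChildwiseCostLE (C : Cost L DT τ) (K : Finset String) (T T' : OTree L) (γ : ℝ) : Prop :=
  ∃ c : String → ℝ, (∀ k ∈ K, IsEditCost C (child T k) (child T' k) (c k)) ∧ ∑ k ∈ K, c k ≤ γ

namespace ChildwiseCostLE

variable {K : Finset String} {T T' T'' : OTree L} {γ γ' : ℝ}

theorem of_child_eq (C : Cost L DT τ) (K : Finset String) (h : ∀ k, child T k = child T' k)
    (hγ : 0 ≤ γ) : ChildwiseCostLE C K T T' γ :=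
  ⟨fun _ ↦ 0, fun k _ ↦ h k ▸ .refl C _, by simpa using hγ⟩

theorem trans (h : ChildwiseCostLE C K T T' γ) (h' : ChildwiseCostLE C K T' T'' γ') :
    ChildwiseCostLE C K T T'' (γ + γ') := by
  obtain ⟨c, hc, hsum⟩ := h
  obtain ⟨c', hc', hsum'⟩ := h'
  refine ⟨c + c', fun k hk ↦ (hc k hk).trans (hc' k hk), ?_⟩
  simpa [Finset.sum_add_distrib] using add_le_add hsum hsum'

theorem of_isEditCost_child (K : Finset String) (k₀ : String)
    (h : IsEditCost C (child T k₀) (child T' k₀) γ)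
    (hne : ∀ k ≠ k₀, child T k = child T' k) : ChildwiseCostLE C K T T' γ := by
  refine ⟨Pi.single k₀ γ, fun k _ ↦ ?_, ?_⟩
  · obtain rfl | hk := eq_or_ne k k₀
    · simpa using h
    · simpa [hk, hne k hk] using IsEditCost.refl C _
  · rw [Finset.sum_pi_single']
    split_ifs
    exacts [le_rfl, h.nonneg]

theorem of_objCongr (C : Cost L DT τ) (K : Finset String) {pre post : List (String × PreRLT L)}
    {k : String} {t t' : PreRLT L} (e : Estep τ t t') (hk : k ∉ pre.map Prod.fst) :
    ChildwiseCostLE C K (some (.obj (pre ++ (k, t) :: post)))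
      (some (.obj (pre ++ (k, t') :: post))) (e.cost C) := by
  have hchild (u : PreRLT L) : child (some (.obj (pre ++ (k, u) :: post))) k = some u := by
    simp [child, List.lookup_append, lookup_eq_none_of_notMem_keys hk]
  refine of_isEditCost_child K k ?_ fun k' hk' ↦ ?_
  · rw [hchild, hchild]
    exact .of_step C (.inner e)
  · simp [child, List.lookup_append, lookup_cons_of_ne _ hk']

theorem of_objDel (C : Cost L DT τ) (K : Finset String) {cs : List (String × PreRLT L)}
    {k : String} {t : PreRLT L} (ht : t.IsLeaf) (hk : k ∉ cs.map Prod.fst) :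
    ChildwiseCostLE C K (some (.obj ((k, t) :: cs))) (some (.obj cs)) (C.del t.kind) := by
  refine of_isEditCost_child K k ?_ fun k' hk' ↦ lookup_cons_of_ne t hk'
  simpa [child, lookup_eq_none_of_notMem_keys hk, EstepO.cost] using
    IsEditCost.of_step C (.delRoot t ht)

theorem of_objIns (C : Cost L DT τ) (K : Finset String) {cs : List (String × PreRLT L)}
    {k : String} {t : PreRLT L} (ht : t.IsLeaf) (hk : k ∉ cs.map Prod.fst) :
    ChildwiseCostLE C K (some (.obj cs)) (some (.obj ((k, t) :: cs))) (C.del t.kind) := by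
  refine of_isEditCost_child K k ?_ fun k' hk' ↦ (lookup_cons_of_ne t hk').symm
  simpa [child, lookup_eq_none_of_notMem_keys hk, EstepO.cost] using
    IsEditCost.of_step C (.insRoot t ht)

end ChildwiseCostLE

theorem EstepO.childwiseCostLE (C : Cost L DT τ) (K : Finset String) {T T' : OTree L}
    (s : EstepO τ T T') (hT : HasNodupKeys T) : ChildwiseCostLE C K T T' (s.cost C) := by
  have of_child_eq (h : ∀ k, child T k = child T' k) : ChildwiseCostLE C K T T' (s.cost C) :=
    .of_child_eq C K h (s.cost_nonneg C)
  cases s with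
  | delRoot t ht => exact of_child_eq (child_of_isLeaf ht)
  | insRoot t ht => exact of_child_eq fun k ↦ (child_of_isLeaf ht k).symm
  | inner e =>
    cases e with
    | relabel | bagPerm | bagCongr | bagDel | bagIns => exact of_child_eq fun _ ↦ rfl
    | objPerm cs σ => exact of_child_eq (lookup_eq_of_perm hT (ofFn_get_perm cs σ).symm)
    | objCongr pre post k e =>
      have hk : k ∉ pre.map Prod.fst := by
        rw [HasNodupKeys, List.map_append, List.nodup_append] at hT
        exact fun hk ↦ hT.2.2 k hk k (by simp) rfl
      exact .of_objCongr C K e hk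
    | objDel cs k t ht => exact .of_objDel C K ht (List.nodup_cons.1 hT).1
    | objIns cs k t ht hk => exact .of_objIns C K ht hk

theorem Eseq.childwiseCostLE (C : Cost L DT τ) (K : Finset String) {T T' : OTree L}
    (S : Eseq τ T T') (hT : HasNodupKeys T) : ChildwiseCostLE C K T T' (S.cost C) := by
  induction S with
  | nil => exact .of_child_eq C K (fun _ ↦ rfl) le_rfl
  | cons s S ih => exact (s.childwiseCostLE C K hT).trans (ih (s.hasNodupKeys hT))

end Restriction

section ObjectRoots

variable {as bs : List (String × PreRLT L)}

theorem sum_editDist_lookup_le (has : (as.map Prod.fst).Nodup)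
    (h : ∃ c, IsEditCost C (some (.obj as)) (some (.obj bs)) c) (K : Finset String) :
    ∑ k ∈ K, editDist C (as.lookup k) (bs.lookup k)
      ≤ editDist C (some (.obj as)) (some (.obj bs)) := by
  refine le_editDist h ?_
  rintro _ ⟨S, rfl⟩
  obtain ⟨c, hc, hsum⟩ := S.childwiseCostLE C K has
  exact (Finset.sum_le_sum fun k hk ↦ editDist_le (hc k hk)).trans hsum

theorem editDist_obj_obj_le_sum (has : (as.map Prod.fst).Nodup) (hbs : (bs.map Prod.fst).Nodup)
    {K : Finset String} (hK : ∀ k ∉ K, as.lookup k = bs.lookup k)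
    (h : ∀ k, ∃ c, IsEditCost C (as.lookup k) (bs.lookup k) c) :
    editDist C (some (.obj as)) (some (.obj bs))
      ≤ ∑ k ∈ K, editDist C (as.lookup k) (bs.lookup k) := by
  choose c hc hlim using fun k ↦ exists_seq_isEditCost_tendsto (h k)
  exact ge_of_tendsto' (tendsto_finsetSum K fun k _ ↦ hlim k) fun n ↦
    editDist_le (.obj_of_lookup has hbs hK fun k _ ↦ hc k n)

theorem editDist_obj_obj_eq_sum (C : Cost L DT τ) (hA : (PreRLT.obj as).WF)
    (hB : (PreRLT.obj bs).WF) {K : Finset String} (hK : ∀ k ∉ K, as.lookup k = bs.lookup k) :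
    editDist C (some (.obj as)) (some (.obj bs))
      = ∑ k ∈ K, editDist C (as.lookup k) (bs.lookup k) :=
  le_antisymm
    (editDist_obj_obj_le_sum hA.nodup_keys hB.nodup_keys hK fun k ↦
      exists_isEditCost C (hA.lookup k) (hB.lookup k))
    (sum_editDist_lookup_le hA.nodup_keys (exists_isEditCost C hA hB) K)

end ObjectRoots

end TED

/-- for trees A, B whose roots are Object nodes with edge-label
sets κ(a), κ(b) and child subtrees A_k, B_k,
d(A, B) = Σ_{k ∈ κ(a) ∩ κ(b)} d(A_k, B_k) + Σ_{k ∈ κ(a) \ κ(b)} d(A_k, Λ)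
        + Σ_{k ∈ κ(b) \ κ(a)} d(Λ, B_k). -/
theorem editDist_obj_obj {L DT : Type} (τ : L → DT) (C : TED.Cost L DT τ)
    (as bs : List (String × TED.PreRLT L))
    (hA : (TED.PreRLT.obj as).WF) (hB : (TED.PreRLT.obj bs).WF) :
    TED.editDist C (some (TED.PreRLT.obj as)) (some (TED.PreRLT.obj bs))
      = (∑ k ∈ (as.map Prod.fst).toFinset ∩ (bs.map Prod.fst).toFinset,
          TED.editDist C (List.lookup k as) (List.lookup k bs))
        + (∑ k ∈ (as.map Prod.fst).toFinset \ (bs.map Prod.fst).toFinset,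
            TED.editDist C (List.lookup k as) none)
        + (∑ k ∈ (bs.map Prod.fst).toFinset \ (as.map Prod.fst).toFinset,
            TED.editDist C none (List.lookup k bs)) := by
  have lookup_eq_none {cs : List (String × TED.PreRLT L)} {k : String}
      (hk : k ∉ (cs.map Prod.fst).toFinset) : cs.lookup k = none :=
    TED.lookup_eq_none_of_notMem_keys fun h ↦ hk (List.mem_toFinset.2 h)
  set Ka := (as.map Prod.fst).toFinset
  set Kb := (bs.map Prod.fst).toFinset
  have hK : ∀ k ∉ Ka ∪ Kb, as.lookup k = bs.lookup k := fun k hk ↦ by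
    rw [Finset.notMem_union] at hk
    rw [lookup_eq_none hk.1, lookup_eq_none hk.2]
  have hdel : ∑ k ∈ Ka \ Kb, TED.editDist C (as.lookup k) none
      = ∑ k ∈ Ka \ Kb, TED.editDist C (as.lookup k) (bs.lookup k) :=
    Finset.sum_congr rfl fun k hk ↦ by rw [lookup_eq_none (Finset.mem_sdiff.1 hk).2]
  have hins : ∑ k ∈ Kb \ Ka, TED.editDist C none (bs.lookup k)
      = ∑ k ∈ Kb \ Ka, TED.editDist C (as.lookup k) (bs.lookup k) :=
    Finset.sum_congr rfl fun k hk ↦ by rw [lookup_eq_none (Finset.mem_sdiff.1 hk).2]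
  rw [TED.editDist_obj_obj_eq_sum C hA hB hK, hdel, hins, Finset.sum_inter_add_sum_sdiff,
    ← Finset.sum_union Finset.disjoint_sdiff, Finset.union_sdiff_self_eq_union]
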